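/- Let n, N be natural numbers, and for each e ∈ Fin n let d_e and m_e be natural numbers, A^e a d_e × d_e complex matrix that is invertible, C^e a d_e × m_e complex matrix, B^e an m_e × d_e complex matrix, L^e an m_e × m_e complex matrix, R_e an m_e × N complex matrix, and F^e ∈ ℂ^{d_e}. Define K := Σ_e R_eᵀ (L^e − B^e (A^e)⁻¹ C^e) R_e and S := −Σ_e R_eᵀ B^e (A^e)⁻¹ F^e. Then a family of vectors (U^e ∈ ℂ^{d_e})_{e ∈ Fin n} together with Λ ∈ ℂ^N satisfies the coupled system A^e U^e + C^e (R_e Λ) = F^e for every e and Σ_e R_eᵀ (B^e U^e + L^e (R_e Λ)) = 0 if and only if Λ satisfies the condensed system K Λ = S and U^e = (A^e)⁻¹ (F^e − C^e (R_e Λ)) for every e. -/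

import Mathlib

open Matrix

/-! Each cell problem has exactly one solution for a given trace. Substituting it turns the
numerical flux of the cell into an affine function of the trace, whose linear part is a Schur
complement; summing the fluxes over the cells then gives `K Λ - S`. -/

namespace StaticCondensation

section Cell

variable {α d m : Type*} [Fintype d]

lemma mulVec_eq_iff_eq_inv_mulVec [CommRing α] [DecidableEq d] {A : Matrix d d α}
    (hA : IsUnit A) {u v : d → α} : A *ᵥ u = v ↔ u = A⁻¹ *ᵥ v := by
  have hdet : IsUnit A.det := A.isUnit_iff_isUnit_det.mp hA
  constructor
  · rintro rfl
    rw [mulVec_mulVec, nonsing_inv_mul A hdet, one_mulVec]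
  · rintro rfl
    rw [mulVec_mulVec, mul_nonsing_inv A hdet, one_mulVec]

lemma mulVec_add_eq_iff_eq_inv_mulVec_sub [CommRing α] [DecidableEq d] {A : Matrix d d α}
    (hA : IsUnit A) {u v f : d → α} : A *ᵥ u + v = f ↔ u = A⁻¹ *ᵥ (f - v) := by
  rw [← eq_sub_iff_add_eq, mulVec_eq_iff_eq_inv_mulVec hA]

lemma flux_eq_schurComplement_mulVec_add {d' m' : Type*} [NonUnitalRing α] [Fintype d']
    [Fintype m] (G : Matrix d d' α) (B : Matrix m' d α) (C : Matrix d' m α)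
    (L : Matrix m' m α) (f : d' → α) (t : m → α) :
    B *ᵥ (G *ᵥ (f - C *ᵥ t)) + L *ᵥ t = (L - B * G * C) *ᵥ t + B *ᵥ (G *ᵥ f) := by
  simp only [mulVec_sub, sub_mulVec, ← mulVec_mulVec]
  abel

end Cell

lemma sum_mulVec_mulVec_add {α ι p q : Type*} {m m' : ι → Type*} [NonUnitalSemiring α]
    [Fintype ι] [Fintype p] [∀ e, Fintype (m e)] [∀ e, Fintype (m' e)]
    (P : ∀ e, Matrix q (m' e) α) (M : ∀ e, Matrix (m' e) (m e) α) (R : ∀ e, Matrix (m e) p α)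
    (g : ∀ e, m' e → α) (Λ : p → α) :
    ∑ e, P e *ᵥ (M e *ᵥ (R e *ᵥ Λ) + g e) =
      (∑ e, P e * M e * R e) *ᵥ Λ + ∑ e, P e *ᵥ g e := by
  simp only [mulVec_add, sum_mulVec, Finset.sum_add_distrib, mulVec_mulVec, Matrix.mul_assoc]

section Mesh

variable {α ι p q : Type*} {d m m' : ι → Type*} [CommRing α] [Fintype ι] [Fintype p]
  [∀ e, Fintype (d e)] [∀ e, DecidableEq (d e)] [∀ e, Fintype (m e)] [∀ e, Fintype (m' e)]
  (A : ∀ e, Matrix (d e) (d e) α) (C : ∀ e, Matrix (d e) (m e) α)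
  (B : ∀ e, Matrix (m' e) (d e) α) (L : ∀ e, Matrix (m' e) (m e) α)
  (R : ∀ e, Matrix (m e) p α) (P : ∀ e, Matrix q (m' e) α) (F : ∀ e, d e → α)

/-- The matrix `K` of the condensed system: the assembled Schur complements of the cell matrices
`A e`. Cell fluxes are assembled by arbitrary matrices `P e`; the HDG method takes `P e = (R e)ᵀ`.
The matrices `A e` are meant to be invertible, as `(A e)⁻¹` is zero otherwise. -/
noncomputable def condensedMatrix : Matrix q p α :=
  ∑ e, P e * (L e - B e * (A e)⁻¹ * C e) * R e

/-- The right-hand side `S` of the condensed system, with the conventions of `condensedMatrix`. -/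
noncomputable def condensedRhs : q → α :=
  -∑ e, P e *ᵥ (B e *ᵥ ((A e)⁻¹ *ᵥ F e))

lemma sum_flux_eq_condensedMatrix_mulVec_sub (Λ : p → α) :
    ∑ e, P e *ᵥ (B e *ᵥ ((A e)⁻¹ *ᵥ (F e - C e *ᵥ (R e *ᵥ Λ))) + L e *ᵥ (R e *ᵥ Λ)) =
      condensedMatrix A C B L R P *ᵥ Λ - condensedRhs A B P F := by
  simp only [flux_eq_schurComplement_mulVec_add, sum_mulVec_mulVec_add, condensedMatrix,
    condensedRhs, sub_neg_eq_add]

end Mesh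

end StaticCondensation

open StaticCondensation in
theorem stmt9_general {α ι p q : Type*} {d m m' : ι → Type*} [CommRing α] [Fintype ι]
    [Fintype p] [∀ e, Fintype (d e)] [∀ e, DecidableEq (d e)] [∀ e, Fintype (m e)]
    [∀ e, Fintype (m' e)] {A : ∀ e, Matrix (d e) (d e) α} (hA : ∀ e, IsUnit (A e))
    (C : ∀ e, Matrix (d e) (m e) α) (B : ∀ e, Matrix (m' e) (d e) α)
    (L : ∀ e, Matrix (m' e) (m e) α) (R : ∀ e, Matrix (m e) p α) (P : ∀ e, Matrix q (m' e) α)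
    (F : ∀ e, d e → α) (U : ∀ e, d e → α) (Λ : p → α) :
    ((∀ e, A e *ᵥ U e + C e *ᵥ (R e *ᵥ Λ) = F e) ∧
      ∑ e, P e *ᵥ (B e *ᵥ U e + L e *ᵥ (R e *ᵥ Λ)) = 0)
    ↔
    (condensedMatrix A C B L R P *ᵥ Λ = condensedRhs A B P F ∧
      ∀ e, U e = (A e)⁻¹ *ᵥ (F e - C e *ᵥ (R e *ᵥ Λ))) := by
  simp only [mulVec_add_eq_iff_eq_inv_mulVec_sub (hA _)]
  rw [and_comm]
  refine and_congr_left fun hU => ?_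
  simp only [hU]
  rw [sum_flux_eq_condensedMatrix_mulVec_sub, sub_eq_zero]

theorem stmt9 (n N : ℕ) (d m : Fin n → ℕ)
    (A : ∀ e : Fin n, Matrix (Fin (d e)) (Fin (d e)) ℂ)
    (hA : ∀ e, IsUnit (A e))
    (C : ∀ e : Fin n, Matrix (Fin (d e)) (Fin (m e)) ℂ)
    (B : ∀ e : Fin n, Matrix (Fin (m e)) (Fin (d e)) ℂ)
    (L : ∀ e : Fin n, Matrix (Fin (m e)) (Fin (m e)) ℂ)
    (R : ∀ e : Fin n, Matrix (Fin (m e)) (Fin N) ℂ)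
    (F : ∀ e : Fin n, Fin (d e) → ℂ)
    (K : Matrix (Fin N) (Fin N) ℂ)
    (hK : K = ∑ e, (R e)ᵀ * (L e - B e * (A e)⁻¹ * C e) * R e)
    (S : Fin N → ℂ)
    (hS : S = -∑ e, (R e)ᵀ *ᵥ (B e *ᵥ ((A e)⁻¹ *ᵥ F e)))
    (U : ∀ e : Fin n, Fin (d e) → ℂ) (Λ : Fin N → ℂ) :
    ((∀ e, A e *ᵥ U e + C e *ᵥ (R e *ᵥ Λ) = F e) ∧
      ∑ e, (R e)ᵀ *ᵥ (B e *ᵥ U e + L e *ᵥ (R e *ᵥ Λ)) = 0)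
    ↔
    (K *ᵥ Λ = S ∧ ∀ e, U e = (A e)⁻¹ *ᵥ (F e - C e *ᵥ (R e *ᵥ Λ))) := by
  subst hK hS
  exact stmt9_general hA C B L R (fun e => (R e)ᵀ) F U Λ
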